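/- Let n ≥ 2, let D be a digital n-object, and let e be a free (n−2)-cell of D that is not an (n−2)-hub of D (an (n−2)-nub). Then b_{n−1}(e, D) = 2, i.e. exactly 2 free (n−1)-cells of D are bounded by e. -/

import Mathlib

/-!
The cell `e` has exactly two even coordinates `a ≠ b`. Hence its block consists of the four voxels
obtained by moving the coordinates `a` and `b` by `±1`, and exactly four `(n-1)`-cells are bounded
by `e`, obtained by moving a single one of these coordinates. Arranged cyclically around `e`, the
four `(n-1)`-cells separate consecutive voxels of the block, and such a cell is free in `D` exactly
when one of the two voxels it separates lies in `D` and the other does not. So `bcount e D (n-1)`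
is the number of colour changes along a `2`-coloured cycle of length four, which is `0`, `2` or
`4`. It is not `0` since `e` is a free cell (both colours occur), and it is `4` only for the
alternating colouring, that is, when `e` is a hub.
-/

namespace DigitalGeometry

/-- The dimension of a cell of the cubical grid (doubled coordinates):
the number of odd coordinates. -/
def cdim {n : ℕ} (c : Fin n → ℤ) : ℕ :=
  (Finset.univ.filter fun j => Odd (c j)).card

/-- The bounding relation `e < f` between cells of the grid. -/
def Bounds {n : ℕ} (e f : Fin n → ℤ) : Prop :=
  cdim e < cdim f ∧ ∀ j, e j = f j ∨ (Odd (f j) ∧ |e j - f j| = 1)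

/-- A voxel is an `n`-cell: all coordinates odd. -/
def IsVoxel {n : ℕ} (v : Fin n → ℤ) : Prop := ∀ j, Odd (v j)

/-- The `i`-block centered on an `i`-cell `e`: all voxels bounded by `e`. -/
def Block {n : ℕ} (e : Fin n → ℤ) : Set (Fin n → ℤ) :=
  {v | IsVoxel v ∧ Bounds e v}

/-- `Cells D i` : the `i`-cells of the object `D` (for `i < n` those bounding
some voxel of `D`; for `i = n` it is `D` itself). -/
def Cells {n : ℕ} (D : Set (Fin n → ℤ)) (i : ℕ) : Set (Fin n → ℤ) :=
  {e | cdim e = i ∧ (e ∈ D ∨ ∃ v ∈ D, Bounds e v)}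

/-- `c_i(D)` : the number of `i`-cells of `D`. -/
noncomputable def cCount {n : ℕ} (D : Set (Fin n → ℤ)) (i : ℕ) : ℕ := (Cells D i).ncard

/-- The free `i`-cells of `D`: those whose `i`-block is not contained in `D`. -/
def FreeCells {n : ℕ} (D : Set (Fin n → ℤ)) (i : ℕ) : Set (Fin n → ℤ) :=
  {e | e ∈ Cells D i ∧ ¬ Block e ⊆ D}

/-- `c*_i(D)` : the number of free `i`-cells of `D`. -/
noncomputable def cStar {n : ℕ} (D : Set (Fin n → ℤ)) (i : ℕ) : ℕ := (FreeCells D i).ncard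

/-- The non-free `i`-cells of `D`. -/
def NonFreeCells {n : ℕ} (D : Set (Fin n → ℤ)) (i : ℕ) : Set (Fin n → ℤ) :=
  {e | e ∈ Cells D i ∧ Block e ⊆ D}

/-- `c'_i(D)` : the number of non-free `i`-cells of `D`. -/
noncomputable def cPrime {n : ℕ} (D : Set (Fin n → ℤ)) (i : ℕ) : ℕ := (NonFreeCells D i).ncard

/-- `InterCell v1 v2 e` : the intersection of the voxels `v1`, `v2`
(as subsets of `ℝ^n`) equals the cell `e`. -/
def InterCell {n : ℕ} (v1 v2 e : Fin n → ℤ) : Prop :=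
  ∀ j, (v1 j = v2 j ∧ e j = v1 j) ∨
       (e j + 1 = max (v1 j) (v2 j) ∧ e j - 1 = min (v1 j) (v2 j))

/-- `e` is an `(n-2)`-hub of `D`, i.e. `D` has an `(n-2)`-gap over `e`. -/
def IsHub {n : ℕ} (D : Set (Fin n → ℤ)) (e : Fin n → ℤ) : Prop :=
  cdim e = n - 2 ∧ ∃ v1 v2 : Fin n → ℤ, v1 ≠ v2 ∧
    Block e ∩ D = {v1, v2} ∧ InterCell v1 v2 e

/-- `g_{n-2}(D)` : the number of `(n-2)`-gaps of `D`. -/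
noncomputable def gapCount {n : ℕ} (D : Set (Fin n → ℤ)) : ℕ := {e | IsHub D e}.ncard

/-- `b_j(e, D)` : the number of free `j`-cells of `D` bounded by `e`. -/
noncomputable def bcount {n : ℕ} (e : Fin n → ℤ) (D : Set (Fin n → ℤ)) (j : ℕ) : ℕ :=
  {f | f ∈ FreeCells D j ∧ Bounds e f}.ncard

/-- Two voxels are `i`-adjacent if they are distinct and their intersection
contains an `i`-cell. -/
def Adj {n : ℕ} (i : ℕ) (v1 v2 : Fin n → ℤ) : Prop :=
  v1 ≠ v2 ∧ ∃ e : Fin n → ℤ, cdim e = i ∧ Bounds e v1 ∧ Bounds e v2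

open Function

lemma cdim_add_even {n : ℕ} (c : Fin n → ℤ) :
    cdim c + (Finset.univ.filter fun j => ¬ Odd (c j)).card = n := by
  simpa [cdim] using Finset.card_filter_add_card_filter_not
    (s := (Finset.univ : Finset (Fin n))) (fun j => Odd (c j))

lemma cdim_voxel {n : ℕ} {v : Fin n → ℤ} (hv : IsVoxel v) : cdim v = n := by
  simp [cdim, Finset.filter_true_of_mem (fun j _ => hv j)]

lemma cdim_eq_sub_one_iff {n : ℕ} (hn : 2 ≤ n) (f : Fin n → ℤ) :
    cdim f = n - 1 ↔ ∃ c, ∀ j, Odd (f j) ↔ j ≠ c := by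
  have h := cdim_add_even f
  have h1 : cdim f = n - 1 ↔ (Finset.univ.filter fun j => ¬ Odd (f j)).card = 1 := by omega
  rw [h1, Finset.card_eq_one]
  refine exists_congr fun c => ?_
  rw [Finset.ext_iff]
  refine forall_congr' fun j => ?_
  simp only [Finset.mem_filter, Finset.mem_univ, true_and, Finset.mem_singleton]
  tauto

lemma exists_even_pair {n : ℕ} (hn : 2 ≤ n) {e : Fin n → ℤ} (he : cdim e = n - 2) :
    ∃ a b, a ≠ b ∧ ∀ j, Odd (e j) ↔ j ≠ a ∧ j ≠ b := by
  have h := cdim_add_even e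
  have h1 : (Finset.univ.filter fun j => ¬ Odd (e j)).card = 2 := by omega
  obtain ⟨a, b, hab, hs⟩ := Finset.card_eq_two.1 h1
  refine ⟨a, b, hab, fun j => ?_⟩
  have := Finset.ext_iff.1 hs j
  simp only [Finset.mem_filter, Finset.mem_univ, true_and, Finset.mem_insert,
    Finset.mem_singleton] at this
  tauto

/-- Two integers of the same parity are not at distance one, so an odd coordinate of a cell is
shared by every cell that it bounds. -/
lemma coord_cases {x y : ℤ} (hy : Odd y) :
    (x = y ∨ (Odd y ∧ |x - y| = 1)) ↔
      (Odd x ∧ y = x) ∨ (¬ Odd x ∧ (y = x + 1 ∨ y = x - 1)) := by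
  rw [abs_eq (by norm_num)]
  simp only [Int.odd_iff] at *
  omega

lemma mem_block_iff {n : ℕ} {e v : Fin n → ℤ} (he : cdim e < n) :
    v ∈ Block e ↔
      ∀ j, (Odd (e j) ∧ v j = e j) ∨ (¬ Odd (e j) ∧ (v j = e j + 1 ∨ v j = e j - 1)) := by
  constructor
  · rintro ⟨hv, -, h⟩ j
    exact (coord_cases (hv j)).1 (h j)
  · intro h
    have hv : IsVoxel v := by
      intro j
      have := h j
      simp only [Int.odd_iff] at *
      omega
    exact ⟨hv, by rwa [cdim_voxel hv], fun j => (coord_cases (hv j)).2 (h j)⟩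

/-- The block of an `(n-1)`-cell with even coordinate `c` consists of two voxels. -/
lemma mem_block_face {n : ℕ} (hn : 2 ≤ n) {f v : Fin n → ℤ} {c : Fin n}
    (hf : ∀ j, Odd (f j) ↔ j ≠ c) :
    v ∈ Block f ↔ v = update f c (f c + 1) ∨ v = update f c (f c - 1) := by
  have hd := (cdim_eq_sub_one_iff hn f).2 ⟨c, hf⟩
  rw [mem_block_iff (by omega)]
  simp only [eq_update_iff, hf]
  constructor
  · intro h
    have hc : v c = f c + 1 ∨ v c = f c - 1 := by simpa using h c
    have hr : ∀ j, j ≠ c → v j = f j := fun j hj => by simpa [hj] using h j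
    exact hc.imp (fun h => ⟨h, hr⟩) (fun h => ⟨h, hr⟩)
  · intro h j
    by_cases hj : j = c
    · subst hj
      simpa using h.imp And.left And.left
    · rcases h with ⟨-, h⟩ | ⟨-, h⟩ <;> simp [hj, h j hj]

/-- An `(n-1)`-cell is free exactly when `D` contains one but not both voxels of its block. -/
lemma mem_freeCells_face {n : ℕ} (hn : 2 ≤ n) {D : Set (Fin n → ℤ)}
    (hvox : ∀ v ∈ D, IsVoxel v) {f : Fin n → ℤ} {c : Fin n}
    (hf : ∀ j, Odd (f j) ↔ j ≠ c) :
    f ∈ FreeCells D (n - 1) ↔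
      ¬ (update f c (f c + 1) ∈ D ↔ update f c (f c - 1) ∈ D) := by
  have hd := (cdim_eq_sub_one_iff hn f).2 ⟨c, hf⟩
  have hfD : f ∉ D := fun h => (hf c).1 (hvox f h c) rfl
  have h1 : (∃ v ∈ D, Bounds f v) ↔ ∃ v ∈ D, v ∈ Block f :=
    exists_congr fun v => and_congr_right fun hv => ⟨fun h => ⟨hvox v hv, h⟩, fun h => h.2⟩
  simp only [FreeCells, Cells, Set.mem_ofPred_eq, hd, true_and, hfD, false_or, h1,
    Set.subset_def, mem_block_face hn hf]
  simp only [forall_eq_or_imp, forall_eq, and_or_left, exists_or, exists_eq_right]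
  tauto

/-- The block of an `(n-2)`-cell with even coordinates `a`, `b` consists of four voxels. -/
lemma mem_block_ridge {n : ℕ} {e v : Fin n → ℤ} (hd : cdim e < n) {a b : Fin n}
    (hab : a ≠ b) (he : ∀ j, Odd (e j) ↔ j ≠ a ∧ j ≠ b) :
    v ∈ Block e ↔
      v = update (update e a (e a + 1)) b (e b + 1) ∨
      v = update (update e a (e a + 1)) b (e b - 1) ∨
      v = update (update e a (e a - 1)) b (e b + 1) ∨
      v = update (update e a (e a - 1)) b (e b - 1) := by
  have key : ∀ s t : ℤ, v = update (update e a s) b t ↔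
      v a = s ∧ v b = t ∧ ∀ j, j ≠ a → j ≠ b → v j = e j := by
    intro s t
    rw [eq_update_iff]
    constructor
    · rintro ⟨h1, h2⟩
      exact ⟨by simpa using h2 a hab, h1, fun j ha hb => by simpa [ha] using h2 j hb⟩
    · rintro ⟨h1, h2, h3⟩
      refine ⟨h2, fun j hb => ?_⟩
      by_cases ha : j = a
      · subst ha; simpa using h1
      · simpa [ha] using h3 j ha hb
  rw [mem_block_iff hd]
  simp only [key, he]
  constructor
  · intro h
    have ha : v a = e a + 1 ∨ v a = e a - 1 := by simpa using h a
    have hb : v b = e b + 1 ∨ v b = e b - 1 := by simpa using h b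
    have hr : ∀ j, j ≠ a → j ≠ b → v j = e j := fun j h1 h2 => by simpa [h1, h2] using h j
    tauto
  · intro h j
    by_cases ha : j = a
    · subst ha; simp; tauto
    · by_cases hb : j = b
      · subst hb; simp; tauto
      · have : v j = e j := by
          rcases h with h | h | h | h <;> exact h.2.2 j ha hb
        simp [ha, hb, this]

/-- Exactly four `(n-1)`-cells are bounded by an `(n-2)`-cell with even coordinates `a`, `b`. -/
lemma faces_of_ridge {n : ℕ} (hn : 2 ≤ n) {e f : Fin n → ℤ} (hd : cdim e = n - 2)
    {a b : Fin n} (hab : a ≠ b) (he : ∀ j, Odd (e j) ↔ j ≠ a ∧ j ≠ b) :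
    (cdim f = n - 1 ∧ Bounds e f) ↔
      f = update e a (e a + 1) ∨ f = update e a (e a - 1) ∨
      f = update e b (e b + 1) ∨ f = update e b (e b - 1) := by
  have hea : ¬ Odd (e a) := by simp [he]
  have heb : ¬ Odd (e b) := by simp [he]
  have fwd : ∀ x y : Fin n, (∀ j, Odd (e j) ↔ j ≠ x ∧ j ≠ y) → x ≠ y →
      (∀ j, Odd (f j) ↔ j ≠ y) → Bounds e f →
      f = update e x (e x + 1) ∨ f = update e x (e x - 1) := by
    intro x y he hxy hf hb
    have h : ∀ j, j ≠ y →
        (Odd (e j) ∧ f j = e j) ∨ (¬ Odd (e j) ∧ (f j = e j + 1 ∨ f j = e j - 1)) :=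
      fun j hj => (coord_cases ((hf j).2 hj)).1 (hb.2 j)
    have hx : f x = e x + 1 ∨ f x = e x - 1 := by simpa [he] using h x hxy
    have hr : ∀ j, j ≠ x → f j = e j := by
      intro j hj
      by_cases hy : j = y
      · subst hy
        rcases hb.2 j with h | h
        · exact h.symm
        · exact absurd h.1 (by simp [hf])
      · simpa [he, hj, hy] using h j hy
    simp only [eq_update_iff]
    exact hx.imp (fun h => ⟨h, hr⟩) (fun h => ⟨h, hr⟩)
  have bwd : ∀ x y : Fin n, (∀ j, Odd (e j) ↔ j ≠ x ∧ j ≠ y) → x ≠ y →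
      (f = update e x (e x + 1) ∨ f = update e x (e x - 1)) →
      cdim f = n - 1 ∧ Bounds e f := by
    intro x y he hxy h
    simp only [eq_update_iff] at h
    have hex : ¬ Odd (e x) := by simp [he]
    have hfx : Odd (f x) ∧ |e x - f x| = 1 := by
      rw [abs_eq (by norm_num)]
      simp only [Int.odd_iff] at *
      omega
    have hr : ∀ j, j ≠ x → f j = e j := by
      rcases h with h | h <;> exact h.2
    have hf : cdim f = n - 1 := by
      refine (cdim_eq_sub_one_iff hn f).2 ⟨y, fun j => ?_⟩
      by_cases hj : j = x
      · subst hj; simp [hfx.1, hxy]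
      · rw [hr j hj, he]; simp [hj]
    refine ⟨hf, by omega, fun j => ?_⟩
    by_cases hj : j = x
    · subst hj; exact Or.inr hfx
    · exact Or.inl (hr j hj).symm
  have he' : ∀ j, Odd (e j) ↔ j ≠ b ∧ j ≠ a := fun j => (he j).trans and_comm
  constructor
  · rintro ⟨hf, hb⟩
    obtain ⟨c, hc⟩ := (cdim_eq_sub_one_iff hn f).1 hf
    -- the even coordinate of `f` is shared by `e`, hence is `a` or `b`
    have hec : ¬ Odd (e c) := by
      have hfc : ¬ Odd (f c) := by simp [hc]
      rcases hb.2 c with h | h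
      · rwa [h]
      · exact absurd h.1 hfc
    have hcab : c = a ∨ c = b := by
      have := he c
      tauto
    rcases hcab with rfl | rfl
    · exact Or.inr (Or.inr (fwd b c he' hab.symm hc hb))
    · rcases fwd a c he hab hc hb with h | h <;> simp [h]
  · rintro (h | h | h)
    · exact bwd a b he hab (Or.inl h)
    · exact bwd a b he hab (Or.inr h)
    · exact bwd b a he' hab.symm h

/-- If `e` is a free `(n-2)`-cell of `D` that is not an `(n-2)`-hub
(an `(n-2)`-nub), then `b_{n-1}(e, D) = 2`. -/
theorem bcount_of_nub (n : ℕ) (hn : 2 ≤ n) (D : Set (Fin n → ℤ))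
    (hfin : D.Finite) (hvox : ∀ v ∈ D, IsVoxel v)
    (e : Fin n → ℤ) (he : e ∈ FreeCells D (n - 2)) (hnothub : ¬ IsHub D e) :
    bcount e D (n - 1) = 2 := by
  classical
  obtain ⟨⟨hd, hcell⟩, hfree⟩ := he
  obtain ⟨a, b, hab, hodd⟩ := exists_even_pair hn hd
  have hba := hab.symm
  have hea : ¬ Odd (e a) := by simp [hodd]
  have heb : ¬ Odd (e b) := by simp [hodd]
  have heD : e ∉ D := fun h => hea (hvox e h a)
  have hblock := fun v => mem_block_ridge (v := v) (by omega) hab hodd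
  have hfaces := fun f => faces_of_ridge (f := f) hn hd hab hodd
  -- moving one even coordinate of `e` to an odd value leaves the other as the only even one
  have hA : ∀ s : ℤ, Odd s → ∀ j, Odd (update e a s j) ↔ j ≠ b := by
    intro s hs j
    by_cases hj : j = a
    · subst hj; simp [hs, hab]
    · simp [hj, hodd]
  have hB : ∀ s : ℤ, Odd s → ∀ j, Odd (update e b s j) ↔ j ≠ a := by
    intro s hs j
    by_cases hj : j = b
    · subst hj; simp [hs, hba]
    · simp [hj, hodd]
  have oa1 : Odd (e a + 1) := by simp only [Int.odd_iff] at *; omega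
  have oa2 : Odd (e a - 1) := by simp only [Int.odd_iff] at *; omega
  have ob1 : Odd (e b + 1) := by simp only [Int.odd_iff] at *; omega
  have ob2 : Odd (e b - 1) := by simp only [Int.odd_iff] at *; omega
  have fa1 := mem_freeCells_face hn hvox (hA _ oa1)
  have fa2 := mem_freeCells_face hn hvox (hA _ oa2)
  have fb1 := mem_freeCells_face hn hvox (hB _ ob1)
  have fb2 := mem_freeCells_face hn hvox (hB _ ob2)
  simp only [update_of_ne hab, update_of_ne hba] at fa1 fa2 fb1 fb2
  rw [update_comm hba, update_comm hba] at fb1 fb2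
  set p := update (update e a (e a + 1)) b (e b + 1) with hp
  set q := update (update e a (e a + 1)) b (e b - 1) with hq
  set r := update (update e a (e a - 1)) b (e b + 1) with hr
  set s := update (update e a (e a - 1)) b (e b - 1) with hs
  -- both colours occur among the four voxels around `e`
  have hsome : p ∈ D ∨ q ∈ D ∨ r ∈ D ∨ s ∈ D := by
    obtain ⟨v, hv, hb⟩ := hcell.resolve_left heD
    rcases (hblock v).1 ⟨hvox v hv, hb⟩ with h | h | h | h <;> rw [h] at hv
    exacts [Or.inl hv, Or.inr (Or.inl hv), Or.inr (Or.inr (Or.inl hv)),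
      Or.inr (Or.inr (Or.inr hv))]
  have hnotall : ¬ (p ∈ D ∧ q ∈ D ∧ r ∈ D ∧ s ∈ D) := by
    rintro ⟨h1, h2, h3, h4⟩
    refine hfree fun v hv => ?_
    rcases (hblock v).1 hv with h | h | h | h <;> rw [h] <;> assumption
  -- the two alternating colourings are excluded since `e` is not a hub
  have hdiag1 : ¬ (p ∈ D ∧ q ∉ D ∧ r ∉ D ∧ s ∈ D) := by
    rintro ⟨h1, h2, h3, h4⟩
    refine hnothub ⟨hd, p, s, ?_, ?_, fun j => ?_⟩
    · intro h
      have := congrFun h b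
      simp [hp, hs] at this
      omega
    · ext v
      simp only [Set.mem_inter_iff, hblock, Set.mem_insert_iff, Set.mem_singleton_iff]
      constructor
      · rintro ⟨h | h | h | h, hv⟩ <;> rw [h] at hv
        exacts [Or.inl h, absurd hv h2, absurd hv h3, Or.inr h]
      · rintro (h | h)
        exacts [⟨Or.inl h, h ▸ h1⟩, ⟨Or.inr (Or.inr (Or.inr h)), h ▸ h4⟩]
    · by_cases hb : j = b
      · subst hb; right; simp [hp, hs]; omega
      · by_cases ha : j = a
        · subst ha; right; simp [hp, hs, hab]; omega
        · left; simp [hp, hs, ha, hb]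
  have hdiag2 : ¬ (p ∉ D ∧ q ∈ D ∧ r ∈ D ∧ s ∉ D) := by
    rintro ⟨h1, h2, h3, h4⟩
    refine hnothub ⟨hd, q, r, ?_, ?_, fun j => ?_⟩
    · intro h
      have := congrFun h b
      simp [hq, hr] at this
      omega
    · ext v
      simp only [Set.mem_inter_iff, hblock, Set.mem_insert_iff, Set.mem_singleton_iff]
      constructor
      · rintro ⟨h | h | h | h, hv⟩ <;> rw [h] at hv
        exacts [absurd hv h1, Or.inl h, Or.inr h, absurd hv h4]
      · rintro (h | h)
        exacts [⟨Or.inr (Or.inl h), h ▸ h2⟩, ⟨Or.inr (Or.inr (Or.inl h)), h ▸ h3⟩]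
    · by_cases hb : j = b
      · subst hb; right; simp [hq, hr]; omega
      · by_cases ha : j = a
        · subst ha; right; simp [hq, hr, hab]; omega
        · left; simp [hq, hr, ha, hb]
  have hset : {f | f ∈ FreeCells D (n - 1) ∧ Bounds e f} =
      ((({update e a (e a + 1), update e a (e a - 1), update e b (e b + 1),
        update e b (e b - 1)} : Finset (Fin n → ℤ)).filter
          (· ∈ FreeCells D (n - 1)) : Finset (Fin n → ℤ)) : Set (Fin n → ℤ)) := by
    ext f
    simp only [Finset.coe_filter, Set.mem_ofPred_eq, Finset.mem_insert, Finset.mem_singleton,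
      ← hfaces]
    exact ⟨fun h => ⟨⟨h.1.1.1, h.2⟩, h.1⟩, fun h => ⟨h.2, h.1.2⟩⟩
  have n12 : update e a (e a + 1) ≠ update e a (e a - 1) := by
    intro h
    have := congrFun h a
    simp at this
    omega
  have n34 : update e b (e b + 1) ≠ update e b (e b - 1) := by
    intro h
    have := congrFun h b
    simp at this
    omega
  have nab : ∀ x y : ℤ, Odd x → update e a x ≠ update e b y := by
    intro x y hx h
    have := congrFun h a
    simp [hab] at this
    exact hea (this ▸ hx)
  have n13 := nab _ (e b + 1) oa1
  have n14 := nab _ (e b - 1) oa1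
  have n23 := nab _ (e b + 1) oa2
  have n24 := nab _ (e b - 1) oa2
  rw [bcount, hset, Set.ncard_coe_finset]
  simp only [Finset.filter_insert, Finset.filter_singleton, fa1, fa2, fb1, fb2]
  by_cases h1 : p ∈ D <;> by_cases h2 : q ∈ D <;> by_cases h3 : r ∈ D <;> by_cases h4 : s ∈ D <;>
    simp [h1, h2, h3, h4] at hsome hnotall hdiag1 hdiag2 ⊢ <;>
    exact Finset.card_pair (by assumption)

end DigitalGeometry
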